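/- Let R be a commutative ring, n ≥ 3, and α, β ∈ SL_n(R). If α (or β) is homotopic to the identity, then αβ = βαε for some ε ∈ E_n(R). -/

import Mathlib

open Matrix Polynomial

/-- `ElemGroup R n` is the elementary subgroup `E_n(R)`: generated by the elementary
matrices `e_ij(λ) = I + λ E_ij`, `i ≠ j`. -/
def ElemGroup (R : Type*) [CommRing R] (n : ℕ) : Submonoid (Matrix (Fin n) (Fin n) R) :=
  Submonoid.closure {A | ∃ (i j : Fin n) (c : R), i ≠ j ∧ A = Matrix.transvection i j c}

/-- A matrix `α ∈ SL_n(R)` is homotopic to the identity if there is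
`γ(X) ∈ SL_n(R[X])` with `γ(0) = I` and `γ(1) = α`. -/
def HomotopicToId {R : Type*} [CommRing R] {n : ℕ} (α : Matrix (Fin n) (Fin n) R) : Prop :=
  ∃ γ : Matrix (Fin n) (Fin n) (Polynomial R),
    γ.det = 1 ∧ γ.map (Polynomial.eval 0) = 1 ∧ γ.map (Polynomial.eval 1) = α

/-!
Let `γ(X)` join `1` to `α`. The commutator `σ(X) = [β, γ(X)]` is `1` at `X = 0` and `[β, α]` at
`X = 1`, so it is enough that `σ` is elementary over `R[X]`. Over a local ring `SL = E`, so `β` is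
elementary locally, and so is `σ` because `E` is normal for `n ≥ 3`. Suslin's analogue of Quillen's
patching then makes `σ` elementary globally.

Both normality and patching rest on one formula: the conjugate of a transvection is
`1 + v ((u·v) w - (w·v) u)ᵀ` for suitable vectors `u`, `v`, `w`. This expression is elementary for
*arbitrary* `u`, `v`, `w`, and it is polynomial in them, so that denominators can be cleared and
conjugates of transvections over a localization lift to elementary matrices.
-/

open scoped commutatorElement

section ElementaryGroup

local notation "SL" => Matrix.SpecialLinearGroup

variable {ι : Type*} [Fintype ι] [DecidableEq ι] {R S T : Type*} [CommRing R] [CommRing S]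
  [CommRing T]

variable (ι R) in
/-- The elementary subgroup `E_ι(R)` of `SL_ι(R)`, as a subgroup and over an arbitrary finite
index type, so that normality and quotients are available. -/
def elementarySubgroup : Subgroup (SL ι R) :=
  Subgroup.closure (Set.range TransvectionStruct.toSpecialLinearGroup)

lemma transvection_mem_elementarySubgroup {i j : ι} (hij : i ≠ j) (c : R) :
    SpecialLinearGroup.transvection hij c ∈ elementarySubgroup ι R :=
  Subgroup.subset_closure ⟨⟨i, j, hij, c⟩, rfl⟩

lemma elementarySubgroup_le_iff {K : Subgroup (SL ι R)} :
    elementarySubgroup ι R ≤ K ↔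
      ∀ (i j : ι) (hij : i ≠ j) (c : R), SpecialLinearGroup.transvection hij c ∈ K := by
  refine ⟨fun h i j hij c => h (transvection_mem_elementarySubgroup hij c), fun h => ?_⟩
  rw [elementarySubgroup, Subgroup.closure_le]
  rintro _ ⟨t, rfl⟩
  exact h t.i t.j t.hij t.c

lemma specialLinearGroup_map_map (f : R →+* S) (g : S →+* T) (x : SL ι R) :
    SpecialLinearGroup.map g (SpecialLinearGroup.map f x) =
      SpecialLinearGroup.map (g.comp f) x :=
  rfl

lemma specialLinearGroup_map_transvection (f : R →+* S) {i j : ι} (hij : i ≠ j) (c : R) :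
    SpecialLinearGroup.map f (SpecialLinearGroup.transvection hij c) =
      SpecialLinearGroup.transvection hij (f c) := by
  ext a b
  simp [SpecialLinearGroup.transvection_coe, single_apply, one_apply, apply_ite f]

lemma map_mem_elementarySubgroup (f : R →+* S) {x : SL ι R} (hx : x ∈ elementarySubgroup ι R) :
    SpecialLinearGroup.map f x ∈ elementarySubgroup ι S := by
  have hle : elementarySubgroup ι R ≤
      (elementarySubgroup ι S).comap (SpecialLinearGroup.map f) := by
    refine elementarySubgroup_le_iff.2 fun i j hij c => ?_
    rw [Subgroup.mem_comap, specialLinearGroup_map_transvection]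
    exact transvection_mem_elementarySubgroup hij _
  exact hle hx

lemma coe_mem_elemGroup {n : ℕ} {x : SL (Fin n) R} (hx : x ∈ elementarySubgroup (Fin n) R) :
    (x : Matrix (Fin n) (Fin n) R) ∈ ElemGroup R n := by
  have hmem {i j : Fin n} (hij : i ≠ j) (c : R) :
      (SpecialLinearGroup.transvection hij c : Matrix (Fin n) (Fin n) R) ∈ ElemGroup R n :=
    Submonoid.subset_closure ⟨i, j, c, hij, rfl⟩
  induction hx using Subgroup.closure_induction_left with
  | one => exact one_mem _
  | mul_left _ ht _ _ ih =>
    obtain ⟨t, rfl⟩ := ht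
    exact mul_mem (hmem t.hij t.c) ih
  | inv_mul_cancel _ ht _ _ ih =>
    obtain ⟨t, rfl⟩ := ht
    rw [TransvectionStruct.toSpecialLinearGroup_def, SpecialLinearGroup.transvection_inv]
    exact mul_mem (hmem t.hij _) ih

section RankOne

variable (ι R) in
/-- The matrices of `elementarySubgroup ι R`, as a submonoid of the matrix ring; here a
computation with rank one perturbations of `1` needs no determinant. -/
def elementaryMatrices : Submonoid (Matrix ι ι R) :=
  (elementarySubgroup ι R).toSubmonoid.map SpecialLinearGroup.coeMonoidHom

lemma coe_mem_elementaryMatrices {x : SL ι R} :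
    (x : Matrix ι ι R) ∈ elementaryMatrices ι R ↔ x ∈ elementarySubgroup ι R :=
  Submonoid.mem_map_iff_mem SpecialLinearGroup.coeMonoidHom_injective

lemma transvection_mem_elementaryMatrices {i j : ι} (hij : i ≠ j) (c : R) :
    transvection i j c ∈ elementaryMatrices ι R :=
  coe_mem_elementaryMatrices.2 (transvection_mem_elementarySubgroup hij c)

lemma one_add_sum_mem {A κ : Type*} [Semiring A] (M : Submonoid A) (a : κ → A) (s : Finset κ)
    (ha : ∀ i ∈ s, 1 + a i ∈ M) (hmul : ∀ i ∈ s, ∀ j ∈ s, a i * a j = 0) :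
    1 + ∑ i ∈ s, a i ∈ M := by
  classical
  induction s using Finset.induction_on with
  | empty => simp
  | insert k s hk ih =>
    have hks : a k * ∑ i ∈ s, a i = 0 := by
      rw [Finset.mul_sum]
      exact Finset.sum_eq_zero fun i hi =>
        hmul k (Finset.mem_insert_self k s) i (Finset.mem_insert_of_mem hi)
    have hs : 1 + ∑ i ∈ s, a i ∈ M :=
      ih (fun i hi => ha i (Finset.mem_insert_of_mem hi)) fun i hi j hj =>
        hmul i (Finset.mem_insert_of_mem hi) j (Finset.mem_insert_of_mem hj)
    have hprod := mul_mem (ha k (Finset.mem_insert_self k s)) hs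
    rwa [mul_add, mul_one, add_mul, one_mul, hks, add_zero, add_assoc,
      ← Finset.sum_insert hk] at hprod

lemma one_add_vecMulVec_single_right_mem {l : ι} {p : ι → R} (hp : p l = 0) :
    1 + vecMulVec p (Pi.single l 1) ∈ elementaryMatrices ι R := by
  have hsum : vecMulVec p (Pi.single l 1) =
      ∑ i ∈ Finset.univ.erase l, single i l (p i) := by
    ext a b
    by_cases hb : b = l
    · subst hb
      by_cases ha : a = b <;> simp [vecMulVec_apply, Matrix.sum_apply, single_apply, ha, hp]
    · simp [vecMulVec_apply, Matrix.sum_apply, hb, Ne.symm hb]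
  rw [hsum]
  refine one_add_sum_mem _ _ _ (fun i hi => ?_) fun i _ j hj => ?_
  · exact transvection_mem_elementaryMatrices (Finset.ne_of_mem_erase hi) (p i)
  · exact single_mul_single_of_ne _ _ _ _ (Finset.ne_of_mem_erase hj).symm _

lemma one_add_vecMulVec_single_left_mem {l : ι} {q : ι → R} (hq : q l = 0) :
    1 + vecMulVec (Pi.single l 1) q ∈ elementaryMatrices ι R := by
  have hsum : vecMulVec (Pi.single l 1) q =
      ∑ i ∈ Finset.univ.erase l, single l i (q i) := by
    ext a b
    by_cases ha : a = l
    · subst ha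
      by_cases hb : b = a <;> simp [vecMulVec_apply, Matrix.sum_apply, single_apply, hb, hq]
    · simp [vecMulVec_apply, Matrix.sum_apply, ha, Ne.symm ha]
  rw [hsum]
  refine one_add_sum_mem _ _ _ (fun i hi => ?_) fun i hi j _ => ?_
  · exact transvection_mem_elementaryMatrices (Finset.ne_of_mem_erase hi).symm (q i)
  · exact single_mul_single_of_ne _ _ _ _ (Finset.ne_of_mem_erase hi) _

-- With `P = p e_lᵀ` and `Q = e_l qᵀ` this is `1 + P * Q = (1 + P) (1 + Q) (1 - P) (1 - Q)`.
lemma one_add_vecMulVec_mem_of_apply_eq_zero {l : ι} {p q : ι → R} (hp : p l = 0) (hq : q l = 0)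
    (hqp : q ⬝ᵥ p = 0) : 1 + vecMulVec p q ∈ elementaryMatrices ι R := by
  set P := vecMulVec p (Pi.single l 1) with hP
  set Q := vecMulVec (Pi.single l 1) q with hQ
  have hPP : P * P = 0 := by simp [hP, vecMulVec_mul_vecMulVec, hp]
  have hQQ : Q * Q = 0 := by simp [hQ, vecMulVec_mul_vecMulVec, hq]
  have hQP : Q * P = 0 := by simp [hP, hQ, vecMulVec_mul_vecMulVec, hqp]
  have hPQ : vecMulVec p q = P * Q := by simp [hP, hQ, vecMulVec_mul_vecMulVec]
  have hcomm : 1 + P * Q = (1 + P) * (1 + Q) * (1 + -P) * (1 + -Q) := by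
    simp only [mul_add, add_mul, mul_neg, neg_mul, mul_one, one_mul, mul_assoc, hPP, hQQ, hQP,
      mul_zero, add_zero]
    abel
  have hnegP : 1 + -P ∈ elementaryMatrices ι R := by
    rw [hP, ← neg_vecMulVec]
    exact one_add_vecMulVec_single_right_mem (by simp [hp])
  have hnegQ : 1 + -Q ∈ elementaryMatrices ι R := by
    rw [hQ, ← vecMulVec_neg]
    exact one_add_vecMulVec_single_left_mem (by simp [hq])
  rw [hPQ, hcomm]
  exact mul_mem (mul_mem (mul_mem (one_add_vecMulVec_single_right_mem hp)
    (one_add_vecMulVec_single_left_mem hq)) hnegP) hnegQ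

lemma one_add_vecMulVec_mem_of_apply_right_eq_zero {l : ι} {v q : ι → R} (hq : q l = 0)
    (hqv : q ⬝ᵥ v = 0) : 1 + vecMulVec v q ∈ elementaryMatrices ι R := by
  set p : ι → R := v - Pi.single l (v l) with hp
  have hqp : q ⬝ᵥ p = 0 := by simp [hp, dotProduct_sub, hqv, hq]
  have hsplit : 1 + vecMulVec v q =
      (1 + vecMulVec (Pi.single l 1) (v l • q)) * (1 + vecMulVec p q) := by
    have hcross : vecMulVec (Pi.single l 1) (v l • q) * vecMulVec p q = 0 := by
      simp [vecMulVec_mul_vecMulVec, hqp]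
    have hv : v = v l • Pi.single l 1 + p := by simp [hp, ← Pi.single_smul]
    rw [add_mul, one_mul, mul_add, mul_one, hcross, add_zero, vecMulVec_smul,
      add_right_comm, add_assoc, ← smul_vecMulVec, ← add_vecMulVec, ← hv]
  rw [hsplit]
  exact mul_mem (one_add_vecMulVec_single_left_mem (by simp [hq]))
    (one_add_vecMulVec_mem_of_apply_eq_zero (by simp [hp]) hq hqp)

end RankOne

section Koszul

lemma smul_sub_smul_eq_sum_koszul (u v w : ι → R) :
    (u ⬝ᵥ v) • w - (w ⬝ᵥ v) • u =
      ∑ x : ι × ι, (w x.1 * u x.2) • (Pi.single x.1 (v x.2) - Pi.single x.2 (v x.1)) := by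
  have hfirst (k : ι) : ∑ i, ∑ j, w i * u j * (Pi.single i (v j) : ι → R) k =
      (u ⬝ᵥ v) * w k := by
    rw [Finset.sum_comm]
    simp only [Pi.single_apply, mul_ite, mul_zero, Finset.sum_ite_eq, Finset.mem_univ, if_true,
      dotProduct, Finset.sum_mul]
    exact Finset.sum_congr rfl fun j _ => by ring
  have hsecond (k : ι) : ∑ i, ∑ j, w i * u j * (Pi.single j (v i) : ι → R) k =
      (w ⬝ᵥ v) * u k := by
    simp only [Pi.single_apply, mul_ite, mul_zero, Finset.sum_ite_eq, Finset.mem_univ, if_true,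
      dotProduct, Finset.sum_mul]
    exact Finset.sum_congr rfl fun i _ => by ring
  ext k
  simp only [Fintype.sum_prod_type, Finset.sum_apply, Pi.sub_apply, Pi.smul_apply, smul_eq_mul,
    mul_sub, Finset.sum_sub_distrib, hfirst, hsecond]

lemma koszul_dotProduct_self (v : ι → R) (i j : ι) :
    (Pi.single i (v j) - Pi.single j (v i)) ⬝ᵥ v = 0 := by
  simp [sub_dotProduct, mul_comm]

/-- The rank one perturbation `1 + v ((u·v) w - (w·v) u)ᵀ` of the identity: a polynomial expression
in `u`, `v`, `w` which has determinant one for all vectors and equals `1 + v wᵀ` when `u·v = 1` and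
`w·v = 0`. Conjugates of transvections have this form, and it needs no relation between the
vectors, so it can be lifted along localizations. -/
def koszulTransvection (u v w : ι → R) : SL ι R :=
  ⟨1 + vecMulVec v ((u ⬝ᵥ v) • w - (w ⬝ᵥ v) • u), by
    have horth : ((u ⬝ᵥ v) • w - (w ⬝ᵥ v) • u) ⬝ᵥ v = 0 := by simp [sub_dotProduct, mul_comm]
    rw [vecMulVec_eq Unit, det_one_add_replicateCol_mul_replicateRow, horth, add_zero]⟩

lemma coe_koszulTransvection (u v w : ι → R) :
    (koszulTransvection u v w : Matrix ι ι R) =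
      1 + vecMulVec v ((u ⬝ᵥ v) • w - (w ⬝ᵥ v) • u) :=
  rfl

lemma koszulTransvection_zero (u v : ι → R) : koszulTransvection u v 0 = 1 := by
  ext i j
  simp [coe_koszulTransvection]

lemma koszulTransvection_mem_elementarySubgroup (hι : 2 < Fintype.card ι) (u v w : ι → R) :
    koszulTransvection u v w ∈ elementarySubgroup ι R := by
  rw [← coe_mem_elementaryMatrices, coe_koszulTransvection, smul_sub_smul_eq_sum_koszul,
    ← vecMulVecBilin_apply_apply R R, map_sum]
  simp only [vecMulVecBilin_apply_apply]
  refine one_add_sum_mem _ _ _ (fun x _ => ?_) fun x _ y _ => ?_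
  · obtain ⟨l, hl⟩ : ∃ l, l ∉ ({x.1, x.2} : Finset ι) := by
      by_contra! hall
      exact (Finset.card_le_two.trans_lt hι).ne
        (congrArg Finset.card (Finset.eq_univ_of_forall hall))
    obtain ⟨hl₁, hl₂⟩ : l ≠ x.1 ∧ l ≠ x.2 := by simpa using hl
    refine one_add_vecMulVec_mem_of_apply_right_eq_zero (l := l) ?_ ?_
    · simp [hl₁, hl₂]
    · rw [smul_dotProduct, koszul_dotProduct_self, smul_zero]
  · rw [vecMulVec_mul_vecMulVec, smul_dotProduct, koszul_dotProduct_self, smul_zero,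
      zero_smul, vecMulVec_zero]

lemma map_koszulTransvection (f : R →+* S) (u v w : ι → R) :
    SpecialLinearGroup.map f (koszulTransvection u v w) =
      koszulTransvection (f ∘ u) (f ∘ v) (f ∘ w) := by
  ext a b
  simp [coe_koszulTransvection, vecMulVec_apply, one_apply, apply_ite f, RingHom.map_dotProduct]

lemma koszulTransvection_smul (a b c : R) (u v w : ι → R) :
    koszulTransvection (a • u) (b • v) (c • w) = koszulTransvection u v ((a * b ^ 2 * c) • w) := by
  ext i j
  simp only [coe_koszulTransvection, vecMulVec_apply, Matrix.add_apply, Pi.sub_apply, Pi.smul_apply,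
    smul_eq_mul, smul_dotProduct, dotProduct_smul]
  ring

lemma conj_transvection_eq_koszulTransvection (g : SL ι R) {i j : ι} (hij : i ≠ j) (c : R) :
    g * SpecialLinearGroup.transvection hij c * g⁻¹ =
      koszulTransvection (((g⁻¹ : SL ι R) : Matrix ι ι R).row i) ((g : Matrix ι ι R).col i)
        (c • ((g⁻¹ : SL ι R) : Matrix ι ι R).row j) := by
  have hdot (k : ι) : ((g⁻¹ : SL ι R) : Matrix ι ι R).row k ⬝ᵥ (g : Matrix ι ι R).col i =
      (1 : Matrix ι ι R) k i :=
    congrFun₂ (congrArg Subtype.val (inv_mul_cancel g)) k i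
  have hsingle : single i j c = c • vecMulVec (Pi.single i 1) (Pi.single j 1) := by
    rw [← single_eq_single_vecMulVec_single, smul_single, smul_eq_mul, mul_one]
  have hinv : (g : Matrix ι ι R) * ((g⁻¹ : SL ι R) : Matrix ι ι R) = 1 :=
    congrArg Subtype.val (mul_inv_cancel g)
  apply Subtype.ext
  rw [coe_koszulTransvection, smul_dotProduct, hdot, hdot, one_apply_eq, one_apply_ne hij.symm,
    smul_zero, zero_smul, sub_zero, one_smul]
  change (g : Matrix ι ι R) * (1 + single i j c) * ((g⁻¹ : SL ι R) : Matrix ι ι R) = _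
  rw [mul_add, add_mul, mul_one, hinv, hsingle, mul_smul_comm, smul_mul_assoc, mul_vecMulVec,
    vecMulVec_mul, mulVec_single_one, single_one_vecMul, vecMulVec_smul]

lemma elementarySubgroup_normal (hι : 2 < Fintype.card ι) : (elementarySubgroup ι R).Normal := by
  refine ⟨fun x hx g => ?_⟩
  have hle : elementarySubgroup ι R ≤
      (elementarySubgroup ι R).comap (MulAut.conj g).toMonoidHom := by
    refine elementarySubgroup_le_iff.2 fun i j hij c => ?_
    rw [Subgroup.mem_comap, MulEquiv.coe_toMonoidHom, MulAut.conj_apply,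
      conj_transvection_eq_koszulTransvection]
    exact koszulTransvection_mem_elementarySubgroup hι _ _ _
  exact hle hx

end Koszul

section LocalRing

/-- The matrices in `SL_ι(R)` whose columns with index in `J` are those of the identity matrix; they
measure the progress of Gaussian elimination. -/
def columnStabilizer (J : Set ι) : Subgroup (SL ι R) :=
  fixingSubgroup (SL ι R) ((fun j => (Pi.single j 1 : ι → R)) '' J)

lemma mem_columnStabilizer {J : Set ι} {g : SL ι R} :
    g ∈ columnStabilizer J ↔ ∀ j ∈ J, ∀ i, g i j = (1 : Matrix ι ι R) i j := by
  simp only [columnStabilizer, mem_fixingSubgroup_iff, Set.forall_mem_image,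
    Matrix.SpecialLinearGroup.smul_def, smul_eq_mulVec, mulVec_single_one, funext_iff, col_apply,
    one_eq_pi_single, Pi.single_comm]

lemma transvection_mem_columnStabilizer {J : Set ι} {i j : ι} (hij : i ≠ j) (hj : j ∉ J) (c : R) :
    SpecialLinearGroup.transvection hij c ∈ columnStabilizer J := by
  refine mem_columnStabilizer.2 fun b hb a => ?_
  have hjb : j ≠ b := fun h => hj (h ▸ hb)
  simp [SpecialLinearGroup.transvection_coe, single_apply_of_col_ne _ _ hjb]

lemma apply_self_eq_one_of_mem_columnStabilizer {k : ι} {g : SL ι R}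
    (hg : g ∈ columnStabilizer {k}ᶜ) : g k k = 1 := by
  have hcol : (g : Matrix ι ι R) = (1 : Matrix ι ι R).updateCol k fun i => g i k := by
    ext i j
    by_cases hj : j = k
    · rw [hj, updateCol_self]
    · rw [updateCol_ne hj, mem_columnStabilizer.1 hg j hj]
  have hdet : (g : Matrix ι ι R).det = 1 := g.2
  rw [hcol, ← cramer_apply, cramer_one] at hdet
  simpa using hdet

lemma exists_mul_mem_columnStabilizer_insert {J : Set ι} {k : ι} {g : SL ι R}
    (hg : g ∈ columnStabilizer J) (hk : g k k = 1) :
    ∃ e ∈ elementarySubgroup ι R, e * g ∈ columnStabilizer (insert k J) := by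
  set p : ι → R := Pi.single k 1 - fun i => g i k with hp
  obtain ⟨e, he, hep⟩ : 1 + vecMulVec p (Pi.single k 1) ∈ elementaryMatrices ι R :=
    one_add_vecMulVec_single_right_mem (by simp [hp, hk])
  have hentry (i j : ι) : (e * g) i j = g i j + p i * g k j := by
    rw [SpecialLinearGroup.coeMonoidHom_apply] at hep
    rw [Matrix.SpecialLinearGroup.coe_mul, hep, add_mul, one_mul, vecMulVec_mul, single_one_vecMul]
    rfl
  refine ⟨e, he, mem_columnStabilizer.2 ?_⟩
  rintro j (rfl | hj) i
  · simp [hentry, hp, hk, one_apply, Pi.single_apply]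
  · by_cases hkj : k = j
    · subst hkj
      simp [hentry, hp, hk, one_apply, Pi.single_apply]
    · rw [hentry, mem_columnStabilizer.1 hg j hj, mem_columnStabilizer.1 hg j hj,
        one_apply_ne hkj, mul_zero, add_zero]

lemma exists_mul_apply_eq_one_of_isUnit {J : Set ι} {a i k : ι} (hai : a ≠ i) (hi : i ∉ J)
    {g : SL ι R} (hu : IsUnit (g i k)) :
    ∃ e ∈ elementarySubgroup ι R ⊓ columnStabilizer J, (e * g) a k = 1 := by
  obtain ⟨v, hv⟩ := hu.exists_left_inv
  refine ⟨SpecialLinearGroup.transvection hai ((1 - g a k) * v),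
    ⟨transvection_mem_elementarySubgroup _ _, transvection_mem_columnStabilizer _ hi _⟩, ?_⟩
  rw [Matrix.SpecialLinearGroup.coe_mul, SpecialLinearGroup.transvection_coe, ← transvection,
    transvection_mul_apply_same, mul_assoc, hv, mul_one, add_sub_cancel]

variable [IsLocalRing R]

lemma exists_notMem_isUnit_apply {J : Set ι} {k : ι} (hk : k ∉ J) {g : SL ι R}
    (hg : g ∈ columnStabilizer J) : ∃ i ∉ J, IsUnit (g i k) := by
  have hsum : ∑ i, (g⁻¹ : SL ι R) k i * g i k = 1 := by
    rw [← mul_apply, ← Matrix.SpecialLinearGroup.coe_mul, inv_mul_cancel,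
      Matrix.SpecialLinearGroup.coe_one, one_apply_eq]
  obtain ⟨i, -, hi⟩ := IsLocalRing.exists_of_isUnit_sum (s := Finset.univ) (hsum ▸ isUnit_one)
  refine ⟨i, fun hiJ => ?_, isUnit_of_mul_isUnit_right hi⟩
  have hzero : (g⁻¹ : SL ι R) k i = 0 := by
    rw [mem_columnStabilizer.1 (inv_mem hg) i hiJ, one_apply_ne]
    rintro rfl
    exact hk hiJ
  rw [hzero, zero_mul] at hi
  exact not_isUnit_zero hi

lemma exists_mul_apply_self_eq_one {J : Set ι} {k : ι} (hk : k ∉ J) {g : SL ι R}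
    (hg : g ∈ columnStabilizer J) :
    ∃ e ∈ elementarySubgroup ι R ⊓ columnStabilizer J, (e * g) k k = 1 := by
  by_cases hJ : {k}ᶜ ⊆ J
  · refine ⟨1, one_mem _, ?_⟩
    rw [one_mul]
    exact apply_self_eq_one_of_mem_columnStabilizer <|
      mem_columnStabilizer.2 fun j hj => mem_columnStabilizer.1 hg j (hJ hj)
  obtain ⟨l, hlk, hlJ⟩ := Set.not_subset.1 hJ
  obtain ⟨i, hiJ, hi⟩ := exists_notMem_isUnit_apply hk hg
  by_cases hik : k = i
  · subst hik
    obtain ⟨e, he, hl⟩ := exists_mul_apply_eq_one_of_isUnit hlk hiJ hi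
    obtain ⟨e', he', hk'⟩ :=
      exists_mul_apply_eq_one_of_isUnit (Ne.symm hlk) hlJ (hl.symm ▸ isUnit_one)
    exact ⟨e' * e, mul_mem he' he, by rwa [mul_assoc]⟩
  · exact exists_mul_apply_eq_one_of_isUnit hik hiJ hi

lemma mem_elementarySubgroup_of_mem_columnStabilizer_compl (U : Finset ι) {g : SL ι R}
    (hg : g ∈ columnStabilizer (U : Set ι)ᶜ) : g ∈ elementarySubgroup ι R := by
  induction U using Finset.induction_on generalizing g with
  | empty =>
    have hone : g = 1 := by
      ext i j
      exact mem_columnStabilizer.1 hg j (by simp) i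
    exact hone ▸ one_mem _
  | insert k U hk ih =>
    have hkJ : k ∉ ((insert k U : Finset ι) : Set ι)ᶜ := by simp
    have hU : insert k ((insert k U : Finset ι) : Set ι)ᶜ = (U : Set ι)ᶜ := by
      ext x
      by_cases hx : x = k <;> simp [hx, hk]
    obtain ⟨e, ⟨heE, heJ⟩, hek⟩ := exists_mul_apply_self_eq_one hkJ hg
    obtain ⟨e', he', hcol⟩ := exists_mul_mem_columnStabilizer_insert (mul_mem heJ hg) hek
    have hmem : e' * (e * g) ∈ elementarySubgroup ι R := ih (hU ▸ hcol)
    rwa [Subgroup.mul_mem_cancel_left _ he', Subgroup.mul_mem_cancel_left _ heE] at hmem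

lemma mem_elementarySubgroup_of_isLocalRing (g : SL ι R) : g ∈ elementarySubgroup ι R :=
  mem_elementarySubgroup_of_mem_columnStabilizer_compl Finset.univ
    (mem_columnStabilizer.2 (by simp))

end LocalRing

section Relative

variable (ι) in
/-- The relative elementary subgroup `E_ι(R, I)`: the normal subgroup of `SL_ι(R)` generated by the
transvections with parameter in the ideal `I`. The normal closure is taken in `SL_ι(R)`, not in
`E_ι(R)`. -/
def relElementarySubgroup (I : Ideal R) : Subgroup (SL ι R) :=
  Subgroup.normalClosure
    {x | ∃ (i j : ι) (hij : i ≠ j), ∃ c ∈ I, x = SpecialLinearGroup.transvection hij c}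

lemma transvection_mem_relElementarySubgroup {I : Ideal R} {i j : ι} (hij : i ≠ j) {c : R}
    (hc : c ∈ I) : SpecialLinearGroup.transvection hij c ∈ relElementarySubgroup ι I :=
  Subgroup.subset_normalClosure ⟨i, j, hij, c, hc, rfl⟩

lemma relElementarySubgroup_le_iff {I : Ideal R} {K : Subgroup (SL ι R)} :
    relElementarySubgroup ι I ≤ K ↔ ∀ (g : SL ι R) (i j : ι) (hij : i ≠ j), ∀ c ∈ I,
      g * SpecialLinearGroup.transvection hij c * g⁻¹ ∈ K := by
  refine ⟨fun h g i j hij c hc => h ?_, fun h => ?_⟩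
  · exact Subgroup.normalClosure_normal.conj_mem _
      (transvection_mem_relElementarySubgroup hij hc) g
  · rw [relElementarySubgroup, Subgroup.normalClosure, Subgroup.closure_le]
    intro x hx
    obtain ⟨_, ⟨i, j, hij, c, hc, rfl⟩, hconj⟩ := Group.mem_conjugatesOfSet_iff.1 hx
    obtain ⟨g, rfl⟩ := isConj_iff.1 hconj
    exact h g i j hij c hc

lemma mem_relElementarySubgroup_of_map_eq_one {I : Ideal R} (f : R →+* R)
    (hf : ∀ c, c - f c ∈ I) {x : SL ι R} (hx : x ∈ elementarySubgroup ι R)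
    (hfx : SpecialLinearGroup.map f x = 1) : x ∈ relElementarySubgroup ι I := by
  have : (relElementarySubgroup ι I).Normal := Subgroup.normalClosure_normal
  set π := QuotientGroup.mk' (relElementarySubgroup ι I)
  have hle : elementarySubgroup ι R ≤ π.eqLocus (π.comp (SpecialLinearGroup.map f)) := by
    refine elementarySubgroup_le_iff.2 fun i j hij c => ?_
    have hker : π (SpecialLinearGroup.transvection hij (c - f c)) = 1 :=
      (QuotientGroup.eq_one_iff _).2 (transvection_mem_relElementarySubgroup hij (hf c))
    change π _ = π _
    rw [specialLinearGroup_map_transvection, ← sub_add_cancel c (f c),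
      SpecialLinearGroup.transvection_add, map_mul, hker, one_mul, sub_add_cancel]
  have hx1 : π x = π (SpecialLinearGroup.map f x) := hle hx
  rw [hfx, map_one] at hx1
  exact (QuotientGroup.eq_one_iff _).1 hx1

end Relative

section Dilation

/-- The substitution `X ↦ t X`, which clears denominators in polynomials without constant term. -/
noncomputable def dilate (t : R) : R[X] →+* R[X] :=
  compRingHom (C t * X)

lemma dilate_C (t a : R) : dilate t (C a) = C a := by
  simp [dilate]

lemma dilate_X (t : R) : dilate t (X : R[X]) = C t * X := by
  simp [dilate]

lemma coeff_dilate (t : R) (p : R[X]) (k : ℕ) : (dilate t p).coeff k = p.coeff k * t ^ k :=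
  comp_C_mul_X_coeff

lemma dilate_comp_dilate (t u : R) : (dilate t).comp (dilate u) = dilate (t * u) := by
  ext <;> simp [dilate, mul_left_comm, mul_assoc]

lemma evalRingHom_zero_comp_dilate (t : R) :
    (evalRingHom 0).comp (dilate t) = evalRingHom 0 := by
  ext <;> simp [dilate]

lemma mapRingHom_comp_dilate (f : R →+* S) (t : R) :
    (mapRingHom f).comp (dilate t) = (dilate (f t)).comp (mapRingHom f) := by
  ext <;> simp [dilate]

lemma evalRingHom_zero_comp_mapRingHom (f : R →+* S) :
    (evalRingHom 0).comp (mapRingHom f) = f.comp (evalRingHom 0) := by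
  ext <;> simp

variable {L : Type*} [CommRing L] [Algebra R L]

variable (ι L) in
/-- The matrices `x ∈ SL_ι(L[X])` such that `x(t X)`, for some `t ∈ M`, is the image of an
elementary matrix over `R[X]` which is `1` at `X = 0`. They form a subgroup, so that lifting is a
matter of generators. -/
def dilationLift (M : Submonoid R) : Subgroup (SL ι L[X]) where
  carrier := {x | ∃ t ∈ M, ∃ e ∈ elementarySubgroup ι R[X],
    SpecialLinearGroup.map (evalRingHom 0) e = 1 ∧
    SpecialLinearGroup.map (mapRingHom (algebraMap R L)) e =
      SpecialLinearGroup.map (dilate (algebraMap R L t)) x}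
  one_mem' := ⟨1, one_mem _, 1, one_mem _, map_one _, by rw [map_one, map_one]⟩
  inv_mem' := by
    rintro x ⟨t, ht, e, he, he0, hex⟩
    exact ⟨t, ht, e⁻¹, inv_mem he, by rw [map_inv, he0, inv_one], by rw [map_inv, map_inv, hex]⟩
  mul_mem' := by
    rintro x y ⟨t, ht, e, he, he0, hex⟩ ⟨u, hu, d, hd, hd0, hdy⟩
    refine ⟨t * u, mul_mem ht hu,
      SpecialLinearGroup.map (dilate u) e * SpecialLinearGroup.map (dilate t) d,
      mul_mem (map_mem_elementarySubgroup _ he) (map_mem_elementarySubgroup _ hd), ?_, ?_⟩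
    · rw [map_mul, specialLinearGroup_map_map, specialLinearGroup_map_map,
        evalRingHom_zero_comp_dilate, evalRingHom_zero_comp_dilate, he0, hd0, one_mul]
    · rw [map_mul, specialLinearGroup_map_map, specialLinearGroup_map_map, mapRingHom_comp_dilate,
        mapRingHom_comp_dilate, ← specialLinearGroup_map_map, ← specialLinearGroup_map_map, hex,
        hdy, specialLinearGroup_map_map, specialLinearGroup_map_map, dilate_comp_dilate,
        dilate_comp_dilate, map_mul, map_mul, mul_comm (algebraMap R L u)]

variable (M : Submonoid R) [IsLocalization M L]

lemma exists_mapRingHom_eq_C_mul {κ : Type*} [Finite κ] (p : κ → L[X]) :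
    ∃ s ∈ M, ∃ q : κ → R[X],
      ∀ k, mapRingHom (algebraMap R L) (q k) = C (algebraMap R L s) * p k := by
  let _ := Polynomial.algebra R L
  have : IsLocalization (M.map C) L[X] := Polynomial.isLocalization M L
  obtain ⟨⟨_, s, hs, rfl⟩, hint⟩ := IsLocalization.exist_integer_multiples_of_finite (M.map C) p
  choose q hq using hint
  refine ⟨s, hs, q, fun k => ?_⟩
  have hk := hq k
  rw [Algebra.smul_def] at hk
  simpa [Polynomial.algebraMap_def] using hk

-- If `s` clears the denominators of `u`, `v`, `w`, then `t = s ^ 4` works: the formula is of degree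
-- 1, 2, 1 in `u`, `v`, `w`, and the substitution `X ↦ t X` turns the factor `X` into `t X`.
lemma koszulTransvection_X_smul_mem_dilationLift (hι : 2 < Fintype.card ι) (u v w : ι → L[X]) :
    koszulTransvection u v ((X : L[X]) • w) ∈ dilationLift ι L M := by
  obtain ⟨s, hs, q, hq⟩ := exists_mapRingHom_eq_C_mul M (Sum.elim u (Sum.elim v w))
  set t := s ^ 4 with ht
  set a : L[X] := C (algebraMap R L s) with ha
  set d := dilate (algebraMap R L t) with hd
  have hlift (k) : mapRingHom (algebraMap R L) (dilate t (q k)) =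
      a * d (Sum.elim u (Sum.elim v w) k) := by
    rw [← RingHom.comp_apply, mapRingHom_comp_dilate, RingHom.comp_apply, hq, map_mul, dilate_C]
  set u' := dilate t ∘ q ∘ Sum.inl
  set v' := dilate t ∘ q ∘ Sum.inr ∘ Sum.inl
  set w' := dilate t ∘ q ∘ Sum.inr ∘ Sum.inr with hw'
  have hu : mapRingHom (algebraMap R L) ∘ u' = a • (d ∘ u) := funext fun k => hlift (Sum.inl k)
  have hv : mapRingHom (algebraMap R L) ∘ v' = a • (d ∘ v) :=
    funext fun k => hlift (Sum.inr (Sum.inl k))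
  have hw : mapRingHom (algebraMap R L) ∘ ((X : R[X]) • w') = (X * a) • (d ∘ w) := by
    ext1 k
    have hk := hlift (Sum.inr (Sum.inr k))
    simp only [Function.comp_apply, Pi.smul_apply, smul_eq_mul, map_mul, hw', hk]
    simp [mul_assoc]
  have hXw : d ∘ ((X : L[X]) • w) = (a ^ 4 * X) • (d ∘ w) := by
    ext1 k
    simp [hd, ht, ha, dilate_X]
  have hw0 : evalRingHom 0 ∘ ((X : R[X]) • w') = 0 := by
    ext1 k
    simp
  refine ⟨t, pow_mem hs 4, koszulTransvection u' v' ((X : R[X]) • w'),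
    koszulTransvection_mem_elementarySubgroup hι _ _ _, ?_, ?_⟩
  · rw [map_koszulTransvection, hw0, koszulTransvection_zero]
  · rw [map_koszulTransvection, map_koszulTransvection, hu, hv, hw, hXw,
      koszulTransvection_smul]
    have hdeg : a * a ^ 2 * (X * a) = a ^ 4 * X := by ring
    rw [hdeg]

lemma relElementarySubgroup_span_X_le_dilationLift (hι : 2 < Fintype.card ι) :
    relElementarySubgroup ι (Ideal.span {(X : L[X])}) ≤ dilationLift ι L M := by
  refine relElementarySubgroup_le_iff.2 fun g i j hij c hc => ?_
  obtain ⟨f, rfl⟩ := Ideal.mem_span_singleton.1 hc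
  rw [conj_transvection_eq_koszulTransvection, mul_smul]
  exact koszulTransvection_X_smul_mem_dilationLift M hι _ _ _

lemma exists_dilate_eq_zero {p : R[X]} (h0 : p.coeff 0 = 0)
    (hp : mapRingHom (algebraMap R L) p = 0) : ∃ s ∈ M, dilate s p = 0 := by
  let _ := Polynomial.algebra R L
  have : IsLocalization (M.map C) L[X] := Polynomial.isLocalization M L
  obtain ⟨⟨_, s, hs, rfl⟩, hsp⟩ := (IsLocalization.map_eq_zero_iff (M.map C) L[X] p).1 hp
  refine ⟨s, hs, ext fun k => ?_⟩
  have hsk : s * p.coeff k = 0 := by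
    simpa using congrArg (coeff · k) hsp
  cases k with
  | zero => rw [coeff_dilate, h0, zero_mul, coeff_zero]
  | succ k => rw [coeff_dilate, pow_succ', ← mul_assoc, mul_comm _ s, hsk, zero_mul, coeff_zero]

lemma exists_map_dilate_eq {x y : SL ι R[X]}
    (h0 : SpecialLinearGroup.map (evalRingHom 0) x = SpecialLinearGroup.map (evalRingHom 0) y)
    (hxy : SpecialLinearGroup.map (mapRingHom (algebraMap R L)) x =
      SpecialLinearGroup.map (mapRingHom (algebraMap R L)) y) :
    ∃ s ∈ M, SpecialLinearGroup.map (dilate s) x = SpecialLinearGroup.map (dilate s) y := by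
  have hentry (k : ι × ι) : ∃ s ∈ M, dilate s (x k.1 k.2 - y k.1 k.2) = 0 := by
    refine exists_dilate_eq_zero (L := L) M ?_ ?_
    · rw [coeff_zero_eq_eval_zero, eval_sub]
      exact sub_eq_zero.2 (congrFun₂ (congrArg Subtype.val h0) k.1 k.2)
    · rw [map_sub]
      exact sub_eq_zero.2 (congrFun₂ (congrArg Subtype.val hxy) k.1 k.2)
  choose s hs hsk using hentry
  refine ⟨∏ k, s k, prod_mem fun k _ => hs k, ?_⟩
  ext1 i j
  change dilate _ (x i j) = dilate _ (y i j)
  rw [← sub_eq_zero, ← map_sub, ← Finset.prod_erase_mul _ _ (Finset.mem_univ (i, j)),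
    ← dilate_comp_dilate, RingHom.comp_apply, hsk (i, j), map_zero]

theorem exists_map_dilate_mem_elementarySubgroup (hι : 2 < Fintype.card ι) {σ : SL ι R[X]}
    (h0 : SpecialLinearGroup.map (evalRingHom 0) σ = 1)
    (hσ : SpecialLinearGroup.map (mapRingHom (algebraMap R L)) σ ∈ elementarySubgroup ι L[X]) :
    ∃ t ∈ M, SpecialLinearGroup.map (dilate t) σ ∈ elementarySubgroup ι R[X] := by
  have hrel : SpecialLinearGroup.map (mapRingHom (algebraMap R L)) σ ∈
      relElementarySubgroup ι (Ideal.span {(X : L[X])}) := by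
    refine mem_relElementarySubgroup_of_map_eq_one (C.comp (evalRingHom 0)) (fun c => ?_) hσ ?_
    · rw [Ideal.mem_span_singleton, X_dvd_iff]
      simp [coeff_zero_eq_eval_zero]
    · rw [specialLinearGroup_map_map, RingHom.comp_assoc, evalRingHom_zero_comp_mapRingHom,
        ← specialLinearGroup_map_map, ← specialLinearGroup_map_map, h0, map_one, map_one]
  obtain ⟨t, ht, e, he, he0, het⟩ := relElementarySubgroup_span_X_le_dilationLift M hι hrel
  obtain ⟨s, hs, hse⟩ : ∃ s ∈ M, SpecialLinearGroup.map (dilate s)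
      (SpecialLinearGroup.map (dilate t) σ) = SpecialLinearGroup.map (dilate s) e := by
    refine exists_map_dilate_eq (L := L) M ?_ ?_
    · rw [he0, specialLinearGroup_map_map, evalRingHom_zero_comp_dilate, h0]
    · rw [het, specialLinearGroup_map_map, mapRingHom_comp_dilate, specialLinearGroup_map_map]
  refine ⟨s * t, mul_mem hs ht, ?_⟩
  rw [← dilate_comp_dilate, ← specialLinearGroup_map_map, hse]
  exact map_mem_elementarySubgroup _ he

end Dilation

section LocalGlobal

/-- The scalars `s` for which the class of `σ(f)` modulo `E_ι(R[X])` depends only on `f` modulo `s`,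
that is, `σ(p + s q) σ(p)⁻¹` is elementary for all `p` and `q`. This is the ideal which Quillen's
patching argument shows to be the unit ideal. -/
def quillenIdeal (σ : SL ι R[X]) : Ideal R where
  carrier := {s | ∀ p q : R[X], SpecialLinearGroup.map (compRingHom (p + C s * q)) σ *
    (SpecialLinearGroup.map (compRingHom p) σ)⁻¹ ∈ elementarySubgroup ι R[X]}
  zero_mem' p q := by
    rw [C_0, zero_mul, add_zero, mul_inv_cancel]
    exact one_mem _
  add_mem' {s t} hs ht p q := by
    have hst : p + C (s + t) * q = p + C s * q + C t * q := by
      rw [C_add, add_mul, add_assoc]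
    simpa only [hst, mul_assoc, inv_mul_cancel_left] using
      mul_mem (ht (p + C s * q) q) (hs p q)
  smul_mem' r s hs p q := by
    have hrs : C (r • s) * q = C s * (C r * q) := by
      rw [smul_eq_mul, C_mul, mul_comm (C r), mul_assoc]
    rw [hrs]
    exact hs p (C r * q)

lemma mem_quillenIdeal {σ : SL ι R[X]} {s : R} :
    s ∈ quillenIdeal σ ↔ ∀ p q : R[X], SpecialLinearGroup.map (compRingHom (p + C s * q)) σ *
      (SpecialLinearGroup.map (compRingHom p) σ)⁻¹ ∈ elementarySubgroup ι R[X] :=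
  Iff.rfl

lemma mem_elementarySubgroup_of_one_mem_quillenIdeal {σ : SL ι R[X]}
    (h0 : SpecialLinearGroup.map (evalRingHom 0) σ = 1) (h1 : 1 ∈ quillenIdeal σ) :
    σ ∈ elementarySubgroup ι R[X] := by
  have hX : compRingHom (0 + C 1 * X) = RingHom.id R[X] := by
    ext <;> simp
  have hzero : compRingHom (0 : R[X]) = C.comp (evalRingHom 0) := by
    ext <;> simp
  have hmem := mem_quillenIdeal.1 h1 0 X
  rw [hX, hzero, ← specialLinearGroup_map_map, h0, map_one, inv_one, mul_one] at hmem
  exact hmem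

/-- The substitution `X ↦ X + Y`, from `R[X]` to `R[X][Y]`; it turns the increments
`σ(X + Y) σ(X)⁻¹` into a matrix which is `1` at `Y = 0`. -/
noncomputable def shift (R : Type*) [CommRing R] : R[X] →+* R[X][X] :=
  eval₂RingHom (C.comp C) (C X + X)

lemma evalRingHom_zero_comp_shift : (evalRingHom 0).comp (shift R) = RingHom.id R[X] := by
  ext <;> simp [shift]

lemma evalRingHom_zero_comp_C : (evalRingHom 0).comp C = RingHom.id R := by
  ext
  simp

lemma mapRingHom_comp_shift (f : R →+* S) :
    (mapRingHom (mapRingHom f)).comp (shift R) = (shift S).comp (mapRingHom f) := by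
  ext <;> simp [shift]

lemma eval₂RingHom_comp_dilate_comp_shift (p q : R[X]) (t : R) :
    ((eval₂RingHom (compRingHom p) q).comp (dilate (C t))).comp (shift R) =
      compRingHom (p + C t * q) := by
  ext <;> simp [shift, dilate]

lemma eval₂RingHom_comp_dilate_comp_C (p q : R[X]) (t : R) :
    ((eval₂RingHom (compRingHom p) q).comp (dilate (C t))).comp C = compRingHom p := by
  ext <;> simp [dilate]

lemma exists_mem_quillenIdeal {L : Type*} [CommRing L] [Algebra R L] (M : Submonoid R)
    [IsLocalization M L] (hι : 2 < Fintype.card ι) {σ : SL ι R[X]}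
    (hσ : SpecialLinearGroup.map (mapRingHom (algebraMap R L)) σ ∈ elementarySubgroup ι L[X]) :
    ∃ t ∈ M, t ∈ quillenIdeal σ := by
  let _ := Polynomial.algebra R L
  have : IsLocalization (M.map C) L[X] := Polynomial.isLocalization M L
  set τ : SL ι R[X][X] :=
    SpecialLinearGroup.map (shift R) σ * (SpecialLinearGroup.map C σ)⁻¹ with hτ
  have hτ0 : SpecialLinearGroup.map (evalRingHom 0) τ = 1 := by
    rw [hτ, map_mul, map_inv, specialLinearGroup_map_map, specialLinearGroup_map_map,
      evalRingHom_zero_comp_shift, evalRingHom_zero_comp_C, mul_inv_cancel]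
  have hτL : SpecialLinearGroup.map (mapRingHom (algebraMap R[X] L[X])) τ ∈
      elementarySubgroup ι L[X][X] := by
    rw [hτ, Polynomial.algebraMap_def, map_mul, map_inv, specialLinearGroup_map_map,
      specialLinearGroup_map_map, mapRingHom_comp_shift, mapRingHom_comp_C,
      ← specialLinearGroup_map_map, ← specialLinearGroup_map_map]
    exact mul_mem (map_mem_elementarySubgroup _ hσ) (inv_mem (map_mem_elementarySubgroup _ hσ))
  obtain ⟨_, ⟨t, ht, rfl⟩, hmem⟩ :=
    exists_map_dilate_mem_elementarySubgroup (M.map C) hι hτ0 hτL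
  refine ⟨t, ht, mem_quillenIdeal.2 fun p q => ?_⟩
  have hpq := map_mem_elementarySubgroup (eval₂RingHom (compRingHom p) q) hmem
  change SpecialLinearGroup.map _ (SpecialLinearGroup.map (dilate (C t)) τ) ∈ _ at hpq
  rwa [hτ, map_mul, map_mul, map_inv, map_inv, specialLinearGroup_map_map,
    specialLinearGroup_map_map, specialLinearGroup_map_map, specialLinearGroup_map_map,
    eval₂RingHom_comp_dilate_comp_shift, eval₂RingHom_comp_dilate_comp_C] at hpq

theorem mem_elementarySubgroup_of_localization_maximal (hι : 2 < Fintype.card ι) {σ : SL ι R[X]}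
    (h0 : SpecialLinearGroup.map (evalRingHom 0) σ = 1)
    (hσ : ∀ (m : Ideal R) [m.IsMaximal],
      SpecialLinearGroup.map (mapRingHom (algebraMap R (Localization.AtPrime m))) σ ∈
        elementarySubgroup ι (Localization.AtPrime m)[X]) :
    σ ∈ elementarySubgroup ι R[X] := by
  refine mem_elementarySubgroup_of_one_mem_quillenIdeal h0 ?_
  rw [← Ideal.eq_top_iff_one]
  by_contra htop
  obtain ⟨m, hm, hle⟩ := Ideal.exists_le_maximal _ htop
  obtain ⟨t, ht, htσ⟩ := exists_mem_quillenIdeal m.primeCompl hι (hσ m)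
  exact ht (hle htσ)

end LocalGlobal

section Homotopy

theorem commutator_map_C_mem_elementarySubgroup (hι : 2 < Fintype.card ι) (β : SL ι R)
    {γ : SL ι R[X]} (h0 : SpecialLinearGroup.map (evalRingHom 0) γ = 1) :
    ⁅SpecialLinearGroup.map C β, γ⁆ ∈ elementarySubgroup ι R[X] := by
  refine mem_elementarySubgroup_of_localization_maximal hι ?_ fun m _ => ?_
  · rw [map_commutatorElement, h0, commutatorElement_one_right]
  · set L := Localization.AtPrime m
    have hβ : SpecialLinearGroup.map (mapRingHom (algebraMap R L))
        (SpecialLinearGroup.map C β) ∈ elementarySubgroup ι L[X] := by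
      rw [specialLinearGroup_map_map, mapRingHom_comp_C, ← specialLinearGroup_map_map]
      exact map_mem_elementarySubgroup C (mem_elementarySubgroup_of_isLocalRing _)
    have hnormal : (elementarySubgroup ι L[X]).Normal := elementarySubgroup_normal hι
    rw [map_commutatorElement]
    exact Subgroup.commutator_le_left _ ⊤
      (Subgroup.commutator_mem_commutator hβ (Subgroup.mem_top _))

lemma HomotopicToId.commutator_mem_elementarySubgroup {n : ℕ} (hn : 3 ≤ n) {α : SL (Fin n) R}
    (hα : HomotopicToId (α : Matrix (Fin n) (Fin n) R)) (β : SL (Fin n) R) :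
    ⁅β, α⁆ ∈ elementarySubgroup (Fin n) R := by
  obtain ⟨G, hdet, h0, h1⟩ := hα
  let γ : SL (Fin n) R[X] := ⟨G, hdet⟩
  have hγ0 : SpecialLinearGroup.map (evalRingHom 0) γ = 1 := Subtype.ext h0
  have hγ1 : SpecialLinearGroup.map (evalRingHom 1) γ = α := Subtype.ext h1
  have hβ : SpecialLinearGroup.map (evalRingHom 1) (SpecialLinearGroup.map C β) = β := by
    ext i j
    exact eval_C
  have hmem := map_mem_elementarySubgroup (evalRingHom 1)
    (commutator_map_C_mem_elementarySubgroup (by rwa [Fintype.card_fin]) β hγ0)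
  rwa [map_commutatorElement, hγ1, hβ] at hmem

end Homotopy

end ElementaryGroup

/-- homotopy and commutativity principle for linear groups. -/
theorem stmt3 {R : Type*} [CommRing R] [Nontrivial R] {n : ℕ} (hn : 3 ≤ n)
    (α β : Matrix (Fin n) (Fin n) R) (hα : α.det = 1) (hβ : β.det = 1)
    (hhom : HomotopicToId α ∨ HomotopicToId β) :
    ∃ ε ∈ ElemGroup R n, α * β = β * α * ε := by
  let a : SpecialLinearGroup (Fin n) R := ⟨α, hα⟩
  let b : SpecialLinearGroup (Fin n) R := ⟨β, hβ⟩
  have hcomm : ⁅a, b⁆ ∈ elementarySubgroup (Fin n) R := by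
    rcases hhom with hα' | hβ'
    · rw [← commutatorElement_inv]
      exact inv_mem (HomotopicToId.commutator_mem_elementarySubgroup hn (α := a) hα' b)
    · exact HomotopicToId.commutator_mem_elementarySubgroup hn (α := b) hβ' a
  have hnormal : (elementarySubgroup (Fin n) R).Normal :=
    elementarySubgroup_normal (by rwa [Fintype.card_fin])
  have hmem : (b * a)⁻¹ * (a * b) ∈ elementarySubgroup (Fin n) R := by
    rw [hnormal.mem_comm_iff, _root_.mul_inv_rev, ← mul_assoc, ← commutatorElement_def]
    exact hcomm
  exact ⟨_, coe_mem_elemGroup hmem, congrArg Subtype.val (mul_inv_cancel_left (b * a) (a * b)).symm⟩
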